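/- Let F be a field with char F ≠ 2 and let β ∈ F be such that 1, 0, 2β, β are pairwise distinct. Then every 2-generated axial algebra of Monster type (2β, β) over F has dimension at most 8 as an F-vector space. -/

import Mathlib

/- STATEMENT 1: dimension bound for 2-generated axial algebras of
Monster type (2β, β). -/

variable (F : Type*) [Field F] (A : Type*) [NonUnitalNonAssocCommRing A]
  [Module F A] [SMulCommClass F A A] [IsScalarTower F A A]

/-- The `μ`-eigenspace of the left multiplication operator by `a`. -/
def axEig (a : A) (μ : F) : Submodule F A where
  carrier := {x | a * x = μ • x}
  zero_mem' := by simp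
  add_mem' := fun hx hy => by
    simp only [Set.mem_setOf_eq] at *
    rw [mul_add, hx, hy, smul_add]
  smul_mem' := fun c x hx => by
    simp only [Set.mem_setOf_eq] at *
    rw [mul_smul_comm, hx, smul_smul, smul_smul, mul_comm]

/-- `a` is a primitive axis of Monster type `(α, β)`: an idempotent such that the algebra
is the internal direct sum of the eigenspaces `A_1 ⊕ A_0 ⊕ A_α ⊕ A_β` of ad(a), with
`A_1 = F·a`, and the eigenspaces multiply according to the fusion law `M(α, β)`. -/
structure IsPrimitiveMonsterAxis (α β : F) (a : A) : Prop where
  idem : a * a = a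
  decomp : DirectSum.IsInternal
    (![axEig F A a 1, axEig F A a 0, axEig F A a α, axEig F A a β] : Fin 4 → Submodule F A)
  primitive : axEig F A a 1 = Submodule.span F {a}
  f11 : ∀ x ∈ axEig F A a 1, ∀ y ∈ axEig F A a 1, x * y ∈ axEig F A a 1
  f10 : ∀ x ∈ axEig F A a 1, ∀ y ∈ axEig F A a 0, x * y = 0
  f1a : ∀ x ∈ axEig F A a 1, ∀ y ∈ axEig F A a α, x * y ∈ axEig F A a α
  f1b : ∀ x ∈ axEig F A a 1, ∀ y ∈ axEig F A a β, x * y ∈ axEig F A a β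
  f00 : ∀ x ∈ axEig F A a 0, ∀ y ∈ axEig F A a 0, x * y ∈ axEig F A a 0
  f0a : ∀ x ∈ axEig F A a 0, ∀ y ∈ axEig F A a α, x * y ∈ axEig F A a α
  f0b : ∀ x ∈ axEig F A a 0, ∀ y ∈ axEig F A a β, x * y ∈ axEig F A a β
  faa : ∀ x ∈ axEig F A a α, ∀ y ∈ axEig F A a α, x * y ∈ axEig F A a 1 ⊔ axEig F A a 0
  fab : ∀ x ∈ axEig F A a α, ∀ y ∈ axEig F A a β, x * y ∈ axEig F A a β
  fbb : ∀ x ∈ axEig F A a β, ∀ y ∈ axEig F A a β,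
    x * y ∈ axEig F A a 1 ⊔ axEig F A a 0 ⊔ axEig F A a α

/-- `A` is a 2-generated axial algebra of Monster type `(α, β)`:
it is generated as an `F`-algebra by two primitive axes of Monster type `(α, β)`. -/
def IsTwoGeneratedMonsterType (α β : F) : Prop :=
  ∃ a b : A, IsPrimitiveMonsterAxis F A α β a ∧ IsPrimitiveMonsterAxis F A α β b ∧
    NonUnitalAlgebra.adjoin F ({a, b} : Set A) = ⊤

section

set_option linter.unusedSectionVars false

variable {F A}

/-- `FusionAxis β e` lists, elementwise, the properties of a primitive axis of Monster type
`(2β, β)` that do not refer to the uniqueness of eigenvector decompositions. -/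
structure FusionAxis (β : F) (e : A) : Prop where
  idem : e * e = e
  exists_decomp : ∀ x, ∃ (c : F) (u v w : A), x = c • e + u + v + w ∧
    e * u = 0 ∧ e * v = (2 * β) • v ∧ e * w = β • w
  zero_zero : ∀ x y, e * x = 0 → e * y = 0 → e * (x * y) = 0
  zero_two : ∀ x y, e * x = 0 → e * y = (2 * β) • y → e * (x * y) = (2 * β) • (x * y)
  zero_one : ∀ x y, e * x = 0 → e * y = β • y → e * (x * y) = β • (x * y)
  two_two : ∀ x y, e * x = (2 * β) • x → e * y = (2 * β) • y →
    ∃ (c : F) (u : A), x * y = c • e + u ∧ e * u = 0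
  two_one : ∀ x y, e * x = (2 * β) • x → e * y = β • y → e * (x * y) = β • (x * y)
  one_one : ∀ x y, e * x = β • x → e * y = β • y →
    ∃ (c : F) (u v : A), x * y = c • e + u + v ∧ e * u = 0 ∧ e * v = (2 * β) • v

theorem mem_axEig {a x : A} {μ : F} : x ∈ axEig F A a μ ↔ a * x = μ • x := Iff.rfl

theorem IsPrimitiveMonsterAxis.fusionAxis {β : F} {e : A}
    (h : IsPrimitiveMonsterAxis F A (2 * β) β e) : FusionAxis β e where
  idem := h.idem
  exists_decomp x := by
    have hx : x ∈ axEig F A e 1 ⊔ axEig F A e 0 ⊔ axEig F A e (2 * β) ⊔ axEig F A e β := by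
      have htop := h.decomp.submodule_iSup_eq_top
      have hle : (⨆ i, (![axEig F A e 1, axEig F A e 0, axEig F A e (2 * β), axEig F A e β] :
          Fin 4 → Submodule F A) i) ≤
          axEig F A e 1 ⊔ axEig F A e 0 ⊔ axEig F A e (2 * β) ⊔ axEig F A e β := by
        refine iSup_le fun i => ?_
        fin_cases i
        · exact le_sup_left.trans (le_sup_left.trans le_sup_left)
        · exact le_sup_right.trans (le_sup_left.trans le_sup_left)
        · exact le_sup_right.trans le_sup_left
        · exact le_sup_right
      exact hle (htop ▸ Submodule.mem_top)
    obtain ⟨y, hy, w, hw, rfl⟩ := Submodule.mem_sup.1 hx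
    obtain ⟨z, hz, v, hv, rfl⟩ := Submodule.mem_sup.1 hy
    obtain ⟨t, ht, u, hu, rfl⟩ := Submodule.mem_sup.1 hz
    rw [h.primitive] at ht
    obtain ⟨c, rfl⟩ := Submodule.mem_span_singleton.1 ht
    exact ⟨c, u, v, w, rfl, by simpa [mem_axEig] using hu, hv, hw⟩
  zero_zero x y hx hy := by
    simpa [mem_axEig] using
      h.f00 x (by simpa [mem_axEig] using hx) y (by simpa [mem_axEig] using hy)
  zero_two x y hx hy := h.f0a x (by simpa [mem_axEig] using hx) y hy
  zero_one x y hx hy := h.f0b x (by simpa [mem_axEig] using hx) y hy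
  two_two x y hx hy := by
    obtain ⟨t, ht, u, hu, htu⟩ := Submodule.mem_sup.1 (h.faa x hx y hy)
    rw [h.primitive] at ht
    obtain ⟨c, rfl⟩ := Submodule.mem_span_singleton.1 ht
    exact ⟨c, u, htu.symm, by simpa [mem_axEig] using hu⟩
  two_one x y hx hy := h.fab x hx y hy
  one_one x y hx hy := by
    obtain ⟨z, hz, v, hv, hzv⟩ := Submodule.mem_sup.1 (h.fbb x hx y hy)
    obtain ⟨t, ht, u, hu, rfl⟩ := Submodule.mem_sup.1 hz
    rw [h.primitive] at ht
    obtain ⟨c, rfl⟩ := Submodule.mem_span_singleton.1 ht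
    exact ⟨c, u, v, hzv.symm, by simpa [mem_axEig] using hu, hv⟩

/-- The linear automorphisms of `A` that preserve the multiplication. -/
def mulAut (F A : Type*) [Field F] [NonUnitalNonAssocCommRing A] [Module F A] :
    Subgroup (A ≃ₗ[F] A) where
  carrier := {g | ∀ x y, g (x * y) = g x * g y}
  one_mem' _ _ := rfl
  mul_mem' {g h} hg hh x y := by
    simp only [Set.mem_ofPred_eq] at hg hh
    simp [LinearEquiv.mul_apply, hg, hh]
  inv_mem' {g} hg x y := by
    simp only [Set.mem_ofPred_eq] at hg
    apply g.injective
    rw [hg]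
    simp

theorem mem_mulAut {g : A ≃ₗ[F] A} : g ∈ mulAut F A ↔ ∀ x y, g (x * y) = g x * g y := Iff.rfl

theorem FusionAxis.map {β : F} {e : A} (he : FusionAxis β e) {g : A ≃ₗ[F] A}
    (hg : g ∈ mulAut F A) : FusionAxis β (g e) := by
  rw [mem_mulAut] at hg
  have pull : ∀ (μ : F) (x : A), g e * g x = μ • g x → e * x = μ • x := fun μ x h =>
    g.injective (by rw [hg, h, map_smul])
  have pull0 : ∀ x : A, g e * g x = 0 → e * x = 0 := fun x h =>
    g.injective (by rw [hg, h, map_zero])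
  have push : ∀ (μ : F) (x : A), e * x = μ • x → g e * g x = μ • g x := fun μ x h => by
    rw [← hg, h, map_smul]
  have push0 : ∀ x : A, e * x = 0 → g e * g x = 0 := fun x h => by
    rw [← hg, h, map_zero]
  constructor
  · rw [← hg, he.idem]
  · refine g.surjective.forall.2 fun x => ?_
    obtain ⟨c, u, v, w, rfl, hu, hv, hw⟩ := he.exists_decomp x
    exact ⟨c, g u, g v, g w, by simp, push0 _ hu, push _ _ hv, push _ _ hw⟩
  · refine g.surjective.forall.2 fun x => g.surjective.forall.2 fun y hx hy => ?_
    rw [← hg]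
    exact push0 _ (he.zero_zero x y (pull0 _ hx) (pull0 _ hy))
  · refine g.surjective.forall.2 fun x => g.surjective.forall.2 fun y hx hy => ?_
    rw [← hg]
    exact push _ _ (he.zero_two x y (pull0 _ hx) (pull _ _ hy))
  · refine g.surjective.forall.2 fun x => g.surjective.forall.2 fun y hx hy => ?_
    rw [← hg]
    exact push _ _ (he.zero_one x y (pull0 _ hx) (pull _ _ hy))
  · refine g.surjective.forall.2 fun x => g.surjective.forall.2 fun y hx hy => ?_
    obtain ⟨c, u, h, hu⟩ := he.two_two x y (pull _ _ hx) (pull _ _ hy)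
    exact ⟨c, g u, by simp [← hg, h], push0 _ hu⟩
  · refine g.surjective.forall.2 fun x => g.surjective.forall.2 fun y hx hy => ?_
    rw [← hg]
    exact push _ _ (he.two_one x y (pull _ _ hx) (pull _ _ hy))
  · refine g.surjective.forall.2 fun x => g.surjective.forall.2 fun y hx hy => ?_
    obtain ⟨c, u, v, h, hu, hv⟩ := he.one_one x y (pull _ _ hx) (pull _ _ hy)
    exact ⟨c, g u, g v, by simp [← hg, h], push0 _ hu, push _ _ hv⟩

/-- The Miyamoto involution of an axis `e` of type `(2β, β)`, as a polynomial in the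
multiplication by `e`: it negates the `β`-eigenspace and fixes the other eigenspaces. -/
def miyamoto (β : F) (e : A) : A →ₗ[F] A where
  toFun x := x + (2 / (β * (β - 1) * β)) •
    (e * (e * (e * x)) - (1 + 2 * β) • (e * (e * x)) + (2 * β) • (e * x))
  map_add' x y := by simp only [mul_add]; module
  map_smul' c x := by simp only [mul_smul_comm, RingHom.id_apply]; module

theorem map_miyamoto (β : F) {g : A ≃ₗ[F] A} (hg : g ∈ mulAut F A) (e x : A) :
    g (miyamoto β e x) = miyamoto β (g e) (g x) := by
  rw [mem_mulAut] at hg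
  simp [miyamoto, hg]

theorem FusionAxis.miyamoto_apply {β : F} {e : A} (he : FusionAxis β e) (hβ0 : β ≠ 0)
    (hβ1 : β ≠ 1) {u v w : A} (c : F) (hu : e * u = 0) (hv : e * v = (2 * β) • v)
    (hw : e * w = β • w) : miyamoto β e (c • e + u + v + w) = c • e + u + v - w := by
  have h1 : β - 1 ≠ 0 := sub_ne_zero.2 hβ1
  simp only [miyamoto, LinearMap.coe_mk, AddHom.coe_mk, mul_add, mul_smul_comm, he.idem, hu, hv,
    hw, mul_zero]
  match_scalars <;> field_simp <;> ring

theorem FusionAxis.miyamoto_mul {β : F} {e : A} (he : FusionAxis β e) (hβ0 : β ≠ 0)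
    (hβ1 : β ≠ 1) (x y : A) :
    miyamoto β e (x * y) = miyamoto β e x * miyamoto β e y := by
  obtain ⟨c, u, v, w, rfl, hu, hv, hw⟩ := he.exists_decomp x
  obtain ⟨d, u', v', w', rfl, hu', hv', hw'⟩ := he.exists_decomp y
  obtain ⟨k, z, hz, hz0⟩ := he.two_two v v' hv hv'
  obtain ⟨l, p, r, hp, hp0, hr0⟩ := he.one_one w w' hw hw'
  have comm : ∀ x, x * e = e * x := fun x => mul_comm x e
  rw [he.miyamoto_apply hβ0 hβ1 c hu hv hw, he.miyamoto_apply hβ0 hβ1 d hu' hv' hw']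
  have hE : e * (u * u' + z + p) = 0 := by
    rw [mul_add, mul_add, he.zero_zero u u' hu hu', hz0, hp0]; simp
  have hV : e * ((2 * β * c) • v' + (2 * β * d) • v + u * v' + u' * v + r) =
      (2 * β) • ((2 * β * c) • v' + (2 * β * d) • v + u * v' + u' * v + r) := by
    simp only [mul_add, mul_smul_comm, hv, hv', hr0, he.zero_two u v' hu hv',
      he.zero_two u' v hu' hv]
    module
  have hW : e * ((β * c) • w' + (β * d) • w + u * w' + u' * w + v * w' + v' * w) =
      β • ((β * c) • w' + (β * d) • w + u * w' + u' * w + v * w' + v' * w) := by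
    simp only [mul_add, mul_smul_comm, hw, hw', he.zero_one u w' hu hw',
      he.zero_one u' w hu' hw, he.two_one v w' hv hw', he.two_one v' w hv' hw]
    module
  have key := he.miyamoto_apply hβ0 hβ1 (c * d + k + l) hE hV hW
  convert key using 2
  · simp only [mul_add, add_mul, mul_smul_comm, smul_mul_assoc, comm, he.idem, hu, hv, hw, hu',
      hv', hw', hz, hp, mul_comm v u', mul_comm w u', mul_comm w v']
    module
  · simp only [mul_add, add_mul, mul_sub, sub_mul, mul_smul_comm, smul_mul_assoc, comm, he.idem,
      hu, hv, hw, hu', hv', hw', hz, hp, mul_comm v u', mul_comm w u', mul_comm w v']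
    module

theorem FusionAxis.miyamoto_involutive {β : F} {e : A} (he : FusionAxis β e) (hβ0 : β ≠ 0)
    (hβ1 : β ≠ 1) : Function.Involutive (miyamoto β e) := by
  intro x
  obtain ⟨c, u, v, w, rfl, hu, hv, hw⟩ := he.exists_decomp x
  rw [he.miyamoto_apply hβ0 hβ1 c hu hv hw, sub_eq_add_neg,
    he.miyamoto_apply hβ0 hβ1 c hu hv (by rw [mul_neg, hw, smul_neg]), sub_neg_eq_add]

theorem FusionAxis.miyamoto_self {β : F} {e : A} (he : FusionAxis β e) (hβ0 : β ≠ 0)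
    (hβ1 : β ≠ 1) : miyamoto β e e = e := by
  have := he.miyamoto_apply hβ0 hβ1 (u := 0) (v := 0) (w := 0) 1 (by simp) (by simp) (by simp)
  simpa using this

/-- The correction `x y - β (x + y)` of the product of two elements. -/
def axisDefect (β : F) (x y : A) : A := x * y - β • (x + y)

theorem axisDefect_comm (β : F) (x y : A) : axisDefect β x y = axisDefect β y x := by
  rw [axisDefect, axisDefect, mul_comm, add_comm]

theorem FusionAxis.axisDefect_miyamoto {β : F} {e : A} (he : FusionAxis β e) (hβ0 : β ≠ 0)
    (hβ1 : β ≠ 1) (x : A) : axisDefect β e (miyamoto β e x) = axisDefect β e x := by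
  obtain ⟨c, u, v, w, rfl, hu, hv, hw⟩ := he.exists_decomp x
  rw [he.miyamoto_apply hβ0 hβ1 c hu hv hw]
  simp only [axisDefect, mul_add, mul_sub, mul_smul_comm, he.idem, hu, hv, hw]
  module

theorem FusionAxis.mul_axisDefect {β : F} {e : A} (he : FusionAxis β e) (hβ0 : β ≠ 0)
    (hβ1 : β ≠ 1) (h2 : (2 : F) ≠ 0) (x : A) :
    ∃ c : F, e * axisDefect β e x =
      β • axisDefect β e x + (β ^ 2 / 2) • (x + miyamoto β e x) + c • e := by
  obtain ⟨c, u, v, w, rfl, hu, hv, hw⟩ := he.exists_decomp x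
  refine ⟨(1 - 2 * β) * c + β ^ 2 - β, ?_⟩
  rw [he.miyamoto_apply hβ0 hβ1 c hu hv hw]
  simp only [axisDefect, mul_add, mul_sub, mul_smul_comm, he.idem, hu, hv, hw,
    mul_zero]
  match_scalars <;> field_simp <;> ring

theorem FusionAxis.mul_symm_mul_axisDefect {β : F} {e : A} (he : FusionAxis β e)
    (hβ0 : β ≠ 0) (hβ1 : β ≠ 1) (x : A) :
    ∃ c d : F, e * ((x + miyamoto β e x) * axisDefect β e x) =
      d • (e * (x + miyamoto β e x)) + c • e := by
  obtain ⟨c, u, v, w, rfl, hu, hv, hw⟩ := he.exists_decomp x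
  obtain ⟨k, z, hz, hz0⟩ := he.two_two v v hv hv
  have huu := he.zero_zero u u hu hu
  have comm : ∀ x, x * e = e * x := fun x => mul_comm x e
  have hq : c • e + u + v + w + (c • e + u + v - w) = (2 : F) • (c • e + u + v) := by module
  have hs : axisDefect β e (c • e + u + v + w) = (c - β - β * c) • e + β • v - β • u := by
    simp only [axisDefect, mul_add, mul_smul_comm, he.idem, hu, hv, hw]
    module
  refine ⟨2 * (c * (c - β - β * c) + β * k) - 4 * β * (c - β) * c, 2 * β * (c - β), ?_⟩
  rw [he.miyamoto_apply hβ0 hβ1 c hu hv hw, hq, hs]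
  simp only [mul_add, mul_sub, add_mul, mul_smul_comm, smul_mul_assoc, comm, he.idem, hu, hv,
    hz, hz0, huu, mul_comm v u, mul_zero, smul_zero]
  module

theorem FusionAxis.axisDefect_mul_axisDefect {β : F} {e : A} (he : FusionAxis β e)
    (hβ0 : β ≠ 0) (hβ1 : β ≠ 1) (x y : A) :
    ∃ c d d' : F, (4 : F) • (axisDefect β e x * axisDefect β e y) +
        β • (e * ((x + miyamoto β e x) * (y + miyamoto β e y))) =
      β ^ 2 • ((x + miyamoto β e x) * (y + miyamoto β e y)) + c • e +
        d • (e * (x + miyamoto β e x)) + d' • (e * (y + miyamoto β e y)) := by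
  obtain ⟨c, u, v, w, rfl, hu, hv, hw⟩ := he.exists_decomp x
  obtain ⟨c', u', v', w', rfl, hu', hv', hw'⟩ := he.exists_decomp y
  obtain ⟨k, z, hz, hz0⟩ := he.two_two v v' hv hv'
  have huu := he.zero_zero u u' hu hu'
  have huv := he.zero_two u v' hu hv'
  have huv' := he.zero_two u' v hu' hv
  have comm : ∀ x, x * e = e * x := fun x => mul_comm x e
  have hq : c • e + u + v + w + (c • e + u + v - w) = (2 : F) • (c • e + u + v) := by module
  have hq' : c' • e + u' + v' + w' + (c' • e + u' + v' - w') = (2 : F) • (c' • e + u' + v') := by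
    module
  have hs : axisDefect β e (c • e + u + v + w) = (c - β - β * c) • e + β • v - β • u := by
    simp only [axisDefect, mul_add, mul_smul_comm, he.idem, hu, hv, hw]
    module
  have hs' : axisDefect β e (c' • e + u' + v' + w') =
      (c' - β - β * c') • e + β • v' - β • u' := by
    simp only [axisDefect, mul_add, mul_smul_comm, he.idem, hu', hv', hw']
    module
  refine ⟨4 * (c - β - β * c) * (c' - β - β * c') + 4 * β * (c * c') + 4 * β * k
    - 4 * β ^ 2 * (c * c') - 4 * β * c' * (c - β) - 4 * β * c * (c' - β),
    2 * β * (c' - β), 2 * β * (c - β), ?_⟩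
  rw [he.miyamoto_apply hβ0 hβ1 c hu hv hw, he.miyamoto_apply hβ0 hβ1 c' hu' hv' hw', hq, hq',
    hs, hs']
  simp only [mul_add, mul_sub, add_mul, sub_mul, mul_smul_comm, smul_mul_assoc, comm, he.idem,
    hu, hv, hu', hv', hz, hz0, huu, huv, huv', mul_comm v u', mul_zero, smul_zero]
  module

/-- A two-sided sequence of axes on which the Miyamoto involutions act as the reflections
of the infinite dihedral group on `ℤ`. -/
structure AxisSequence (β : F) (a : ℤ → A) : Prop where
  axis : ∀ i, FusionAxis β (a i)
  miyamoto_apply : ∀ i j, miyamoto β (a i) (a j) = a (2 * i - j)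

theorem exists_axisSequence {β : F} (hβ0 : β ≠ 0) (hβ1 : β ≠ 1) {e f : A}
    (he : FusionAxis β e) (hf : FusionAxis β f) :
    ∃ a : ℤ → A, AxisSequence β a ∧ a 0 = e ∧ a 1 = f := by
  let s : A ≃ₗ[F] A := LinearEquiv.ofInvolutive _ (he.miyamoto_involutive hβ0 hβ1)
  let t : A ≃ₗ[F] A := LinearEquiv.ofInvolutive _ (hf.miyamoto_involutive hβ0 hβ1)
  have hs : ∀ x, s x = miyamoto β e x := fun _ => rfl
  have ht : ∀ x, t x = miyamoto β f x := fun _ => rfl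
  have hsm : s ∈ mulAut F A := he.miyamoto_mul hβ0 hβ1
  have htm : t ∈ mulAut F A := hf.miyamoto_mul hβ0 hβ1
  have hss : s * s = 1 := LinearEquiv.ext (he.miyamoto_involutive hβ0 hβ1)
  have htt : t * t = 1 := LinearEquiv.ext (hf.miyamoto_involutive hβ0 hβ1)
  have hse : s e = e := he.miyamoto_self hβ0 hβ1
  have htf : t f = f := hf.miyamoto_self hβ0 hβ1
  have hsi : s⁻¹ = s := inv_eq_of_mul_eq_one_left hss
  have hti : t⁻¹ = t := inv_eq_of_mul_eq_one_left htt
  let r := t * s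
  have hrm : ∀ k : ℤ, r ^ k ∈ mulAut F A := fun k => zpow_mem (mul_mem htm hsm) k
  have hri : r⁻¹ = s * t := by simp [r, hsi, hti]
  have hsr : ∀ k : ℤ, s * r ^ k = r ^ (-k) * s := fun k => by
    have h : SemiconjBy s r r⁻¹ := by
      rw [SemiconjBy, hri, mul_assoc]
    simpa using (h.zpow_right k).eq
  have htr : ∀ k : ℤ, t * r ^ k = r ^ (-k) * t := fun k => by
    have h : SemiconjBy t r r⁻¹ := by
      rw [SemiconjBy, hri, mul_assoc, htt, ← mul_assoc, htt, one_mul, mul_one]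
    simpa using (h.zpow_right k).eq
  have hsf : s f = (r ^ (-1 : ℤ)) f := by
    rw [zpow_neg_one, hri, LinearEquiv.mul_apply, htf]
  have hte : t e = (r ^ (1 : ℤ)) e := by
    rw [zpow_one, LinearEquiv.mul_apply, hse]
  let a : ℤ → A := fun i => (r ^ (i / 2)) (if i % 2 = 0 then e else f)
  have hae : ∀ k : ℤ, a (2 * k) = (r ^ k) e := fun k => by
    simp [a]
  have hao : ∀ k : ℤ, a (2 * k + 1) = (r ^ k) f := fun k => by
    have h1 : (2 * k + 1) / 2 = k := by omega
    simp [a, h1]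
  have hshift : ∀ k j : ℤ, (r ^ k) (a j) = a (2 * k + j) := fun k j => by
    have h1 : (2 * k + j) / 2 = k + j / 2 := by omega
    simp [a, h1, zpow_add, LinearEquiv.mul_apply]
  have hsa : ∀ j, s (a j) = a (-j) := fun j => by
    obtain ⟨k, rfl | rfl⟩ := Int.even_or_odd' j
    · rw [hae, ← LinearEquiv.mul_apply, hsr, LinearEquiv.mul_apply, hse, ← hae]
      congr 1; ring
    · rw [hao, ← LinearEquiv.mul_apply, hsr, LinearEquiv.mul_apply, hsf, ← LinearEquiv.mul_apply,
        ← zpow_add, ← hao]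
      congr 1; ring
  have hta : ∀ j, t (a j) = a (2 - j) := fun j => by
    obtain ⟨k, rfl | rfl⟩ := Int.even_or_odd' j
    · rw [hae, ← LinearEquiv.mul_apply, htr, LinearEquiv.mul_apply, hte, ← LinearEquiv.mul_apply,
        ← zpow_add, ← hae]
      congr 1; ring
    · rw [hao, ← LinearEquiv.mul_apply, htr, LinearEquiv.mul_apply, htf, ← hao]
      congr 1; ring
  refine ⟨a, ⟨fun i => ?_, fun i j => ?_⟩, by simpa using hae 0, by simpa using hao 0⟩
  · obtain ⟨k, rfl | rfl⟩ := Int.even_or_odd' i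
    · rw [hae]; exact he.map (hrm k)
    · rw [hao]; exact hf.map (hrm k)
  · obtain ⟨l, rfl⟩ : ∃ l, j = 2 * (i / 2) + l := ⟨j - 2 * (i / 2), by ring⟩
    obtain ⟨k, rfl | rfl⟩ := Int.even_or_odd' i
    · rw [hae, ← hshift, show 2 * k / 2 = k by omega, ← map_miyamoto β (hrm k), ← hs, hsa, hshift]
      congr 1; ring
    · rw [hao, ← hshift, show (2 * k + 1) / 2 = k by omega, ← map_miyamoto β (hrm k), ← ht, hta,
        hshift]
      congr 1; ring

namespace AxisSequence

variable {β : F} {a : ℤ → A}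

theorem axisDefect_sub (ha : AxisSequence β a) (hβ0 : β ≠ 0) (hβ1 : β ≠ 1) (i n : ℤ) :
    axisDefect β (a i) (a (i - n)) = axisDefect β (a i) (a (i + n)) := by
  have := (ha.axis i).axisDefect_miyamoto hβ0 hβ1 (a (i + n))
  rwa [ha.miyamoto_apply, show 2 * i - (i + n) = i - n by ring] at this

theorem axisDefect_succ (ha : AxisSequence β a) (hβ0 : β ≠ 0) (hβ1 : β ≠ 1) (i : ℤ) :
    axisDefect β (a i) (a (i + 1)) = axisDefect β (a 0) (a 1) := by
  have step : ∀ i : ℤ, axisDefect β (a i) (a (i + 1)) = axisDefect β (a (i - 1)) (a i) :=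
    fun i => by rw [← ha.axisDefect_sub hβ0 hβ1, axisDefect_comm]
  induction i using Int.induction_on with
  | zero => rfl
  | succ n ih => rw [step, add_sub_cancel_right, ih]
  | pred n ih => rw [sub_add_cancel, ← step, ih]

theorem mul_axisDefect (ha : AxisSequence β a) (hβ0 : β ≠ 0) (hβ1 : β ≠ 1) (h2 : (2 : F) ≠ 0)
    (i n : ℤ) :
    ∃ c : F, a i * axisDefect β (a i) (a (i + n)) = β • axisDefect β (a i) (a (i + n)) +
      (β ^ 2 / 2) • (a (i + n) + a (i - n)) + c • a i := by
  have := (ha.axis i).mul_axisDefect hβ0 hβ1 h2 (a (i + n))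
  rwa [ha.miyamoto_apply, show 2 * i - (i + n) = i - n by ring] at this

theorem miyamoto_mul (ha : AxisSequence β a) (hβ0 : β ≠ 0) (hβ1 : β ≠ 1) (i : ℤ) (x y : A) :
    miyamoto β (a i) (x * y) = miyamoto β (a i) x * miyamoto β (a i) y :=
  (ha.axis i).miyamoto_mul hβ0 hβ1 x y

theorem miyamoto_axisDefect (ha : AxisSequence β a) (hβ0 : β ≠ 0) (hβ1 : β ≠ 1) (i : ℤ) :
    miyamoto β (a i) (axisDefect β (a 0) (a 1)) = axisDefect β (a 0) (a 1) := by
  rw [← ha.axisDefect_succ hβ0 hβ1 i]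
  nth_rw 2 [← ha.axisDefect_sub hβ0 hβ1]
  simp only [axisDefect, map_sub, map_smul, map_add, ha.miyamoto_mul hβ0 hβ1,
    ha.miyamoto_apply, show 2 * i - i = i by ring, show 2 * i - (i + 1) = i - 1 by ring]

theorem mul_two_step (ha : AxisSequence β a) (hβ0 : β ≠ 0) (hβ1 : β ≠ 1) (h2 : (2 : F) ≠ 0)
    (i : ℤ) :
    ∃ g h : F, (2 : F) • (a i * a (i + 2)) = β • (a (i + 2) - a (i - 2)) +
      g • ((2 : F) • axisDefect β (a 0) (a 1) + β • (a (i + 1) + a (i - 1))) + h • a i := by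
  set s := axisDefect β (a 0) (a 1) with hs
  have hsi : ∀ j, axisDefect β (a j) (a (j + 1)) = s := ha.axisDefect_succ hβ0 hβ1
  obtain ⟨c, hc⟩ := ha.mul_axisDefect hβ0 hβ1 h2 i 1
  obtain ⟨d, hd⟩ := ha.mul_axisDefect hβ0 hβ1 h2 (i + 1) 1
  rw [hsi, show i + 1 + 1 = i + 2 by ring, show i + 1 - 1 = i by ring] at hd
  rw [hsi] at hc
  have hms := ha.miyamoto_axisDefect hβ0 hβ1 i
  rw [← hs] at hms
  have hd' : a (i - 1) * s = β • s + (β ^ 2 / 2) • (a (i - 2) + a i) + d • a (i - 1) := by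
    have := congrArg (miyamoto β (a i)) hd
    simpa only [map_smul, map_add, ha.miyamoto_mul hβ0 hβ1, ha.miyamoto_apply, hms,
      show 2 * i - i = i by ring, show 2 * i - (i + 1) = i - 1 by ring,
      show 2 * i - (i + 2) = i - 2 by ring] using this
  obtain ⟨k, l, hkl⟩ := (ha.axis i).mul_symm_mul_axisDefect hβ0 hβ1 (a (i + 1))
  rw [ha.miyamoto_apply, show 2 * i - (i + 1) = i - 1 by ring, hsi, add_mul, hd, hd'] at hkl
  simp only [mul_add, mul_smul_comm, (ha.axis i).idem, hc] at hkl
  have e1 : a i * a (i + 1) = s + β • (a i + a (i + 1)) := by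
    rw [← hsi i, axisDefect]; abel
  have e2 : a i * a (i - 1) = s + β • (a i + a (i - 1)) := by
    rw [← hsi i, ← ha.axisDefect_sub hβ0 hβ1, axisDefect]; abel
  have e3 : a i * a (i - 2) = a i * a (i + 2) + β • a (i - 2) - β • a (i + 2) := by
    have := ha.axisDefect_sub hβ0 hβ1 i 2
    simp only [axisDefect] at this
    linear_combination (norm := module) this
  rw [e1, e2, e3] at hkl
  refine ⟨-(2 / β ^ 2) * (β ^ 2 + d - l),
    -(2 / β ^ 2) * (2 * β * c + β ^ 2 + 2 * β * (d - l) - k), ?_⟩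
  linear_combination (norm := skip) (2 / β ^ 2) • hkl
  match_scalars <;> field_simp <;> ring

theorem six_step (ha : AxisSequence β a) (hβ0 : β ≠ 0) (hβ1 : β ≠ 1) (h2 : (2 : F) ≠ 0) (j : ℤ) :
    ∃ c d : F, a (j + 6) = a j + c • (a (j + 4) - a (j + 2)) + d • (a (j + 5) - a (j + 1)) := by
  obtain ⟨g, h, hgh⟩ := ha.mul_two_step hβ0 hβ1 h2 (j + 2)
  have hT := congrArg (miyamoto β (a (j + 3))) hgh
  simp only [map_smul, map_add, map_sub, ha.miyamoto_mul hβ0 hβ1, ha.miyamoto_apply,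
    ha.miyamoto_axisDefect hβ0 hβ1] at hT
  ring_nf at hT hgh
  rw [mul_comm (a (4 + j)), hgh] at hT
  refine ⟨h / β - 1, g, ?_⟩
  ring_nf
  linear_combination (norm := skip) (1 / β) • hT
  match_scalars <;> field_simp <;> ring

theorem mem_of_consecutive (ha : AxisSequence β a) (hβ0 : β ≠ 0) (hβ1 : β ≠ 1)
    (h2 : (2 : F) ≠ 0) {V : Submodule F A}
    (hV : a 0 ∈ V ∧ a 1 ∈ V ∧ a 2 ∈ V ∧ a 3 ∈ V ∧ a 4 ∈ V ∧ a 5 ∈ V) (i : ℤ) : a i ∈ V := by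
  suffices h : ∀ j : ℤ, a j ∈ V ∧ a (j + 1) ∈ V ∧ a (j + 2) ∈ V ∧ a (j + 3) ∈ V ∧
      a (j + 4) ∈ V ∧ a (j + 5) ∈ V from (h i).1
  intro j
  induction j using Int.induction_on with
  | zero => simpa using hV
  | succ n ih =>
    obtain ⟨h0, h1, h2', h3, h4, h5⟩ := ih
    obtain ⟨c, d, hcd⟩ := ha.six_step hβ0 hβ1 h2 n
    have h6 : a (n + 6) ∈ V := by
      rw [hcd]
      exact V.add_mem (V.add_mem h0 (V.smul_mem _ (V.sub_mem h4 h2')))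
        (V.smul_mem _ (V.sub_mem h5 h1))
    simp only [add_assoc]
    exact ⟨h1, h2', h3, h4, h5, h6⟩
  | pred n ih =>
    obtain ⟨h0, h1, h2', h3, h4, h5⟩ := ih
    obtain ⟨c, d, hcd⟩ := ha.six_step hβ0 hβ1 h2 (-n - 1)
    have hm : a (-n - 1) ∈ V := by
      ring_nf at *
      rw [← sub_eq_iff_eq_add, ← sub_eq_iff_eq_add] at hcd
      rw [← hcd]
      exact V.sub_mem (V.sub_mem h5 (V.smul_mem _ (V.sub_mem h4 h0)))
        (V.smul_mem _ (V.sub_mem h3 h1))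
    refine ⟨hm, ?_⟩
    ring_nf at *
    exact ⟨h0, h1, h2', h3, h4⟩

section LowDistance

variable {W : Submodule F A}

theorem mul_defect_mem (ha : AxisSequence β a) (hβ0 : β ≠ 0) (hβ1 : β ≠ 1) (h2 : (2 : F) ≠ 0)
    (haW : ∀ i, a i ∈ W) (hsW : axisDefect β (a 0) (a 1) ∈ W) (i : ℤ) :
    a i * axisDefect β (a 0) (a 1) ∈ W := by
  obtain ⟨c, hc⟩ := ha.mul_axisDefect hβ0 hβ1 h2 i 1
  rw [ha.axisDefect_succ hβ0 hβ1] at hc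
  rw [hc]
  exact W.add_mem (W.add_mem (W.smul_mem _ hsW)
    (W.smul_mem _ (W.add_mem (haW _) (haW _)))) (W.smul_mem _ (haW _))

theorem mul_succ_mem (ha : AxisSequence β a) (hβ0 : β ≠ 0) (hβ1 : β ≠ 1)
    (haW : ∀ i, a i ∈ W) (hsW : axisDefect β (a 0) (a 1) ∈ W) (i : ℤ) :
    a i * a (i + 1) ∈ W := by
  rw [← ha.axisDefect_succ hβ0 hβ1 i, axisDefect] at hsW
  exact (W.sub_mem_iff_left (W.smul_mem _ (W.add_mem (haW _) (haW _)))).1 hsW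

theorem mul_add_two_mem (ha : AxisSequence β a) (hβ0 : β ≠ 0) (hβ1 : β ≠ 1) (h2 : (2 : F) ≠ 0)
    (haW : ∀ i, a i ∈ W) (hsW : axisDefect β (a 0) (a 1) ∈ W) (i : ℤ) :
    a i * a (i + 2) ∈ W := by
  obtain ⟨g, h, hgh⟩ := ha.mul_two_step hβ0 hβ1 h2 i
  refine (W.smul_mem_iff h2).1 ?_
  rw [hgh]
  exact W.add_mem (W.add_mem (W.smul_mem _ (W.sub_mem (haW _) (haW _)))
    (W.smul_mem _ (W.add_mem (W.smul_mem _ hsW) (W.smul_mem _ (W.add_mem (haW _) (haW _))))))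
    (W.smul_mem _ (haW _))

theorem defect_sq_sub_mem (ha : AxisSequence β a) (hβ0 : β ≠ 0) (hβ1 : β ≠ 1)
    (h2 : (2 : F) ≠ 0) (haW : ∀ i, a i ∈ W) (hsW : axisDefect β (a 0) (a 1) ∈ W) (i : ℤ) :
    (4 : F) • (axisDefect β (a 0) (a 1) * axisDefect β (a 0) (a 1)) -
      β ^ 2 • axisDefect β (a i) (a (i - 3)) ∈ W := by
  set s := axisDefect β (a 0) (a 1) with hs
  have hsucc : a i * a (i + 1) ∈ W := ha.mul_succ_mem hβ0 hβ1 haW hsW i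
  have hpred : a i * a (i - 1) ∈ W := by
    simpa [mul_comm] using ha.mul_succ_mem hβ0 hβ1 haW hsW (i - 1)
  have hsub : a i * a (i - 2) ∈ W := by
    simpa [mul_comm] using ha.mul_add_two_mem hβ0 hβ1 h2 haW hsW (i - 2)
  have his : a i * s ∈ W := ha.mul_defect_mem hβ0 hβ1 h2 haW hsW i
  have hq : a i * (a (i + 1) + a (i - 1)) ∈ W := by
    rw [mul_add]; exact W.add_mem hsucc hpred
  obtain ⟨g, h, hgh⟩ := ha.mul_two_step hβ0 hβ1 h2 (i - 1)
  rw [← hs, show i - 1 + 2 = i + 1 by ring, show i - 1 - 2 = i - 3 by ring,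
    show i - 1 + 1 = i by ring, show i - 1 - 1 = i - 2 by ring] at hgh
  have hqq : (a (i + 1) + a (i - 1)) * (a (i + 1) + a (i - 1)) =
      a (i + 1) + a (i - 1) + (2 : F) • (a (i - 1) * a (i + 1)) := by
    rw [mul_add, add_mul, add_mul, (ha.axis _).idem, (ha.axis _).idem, mul_comm (a (i + 1))]
    module
  have hqqW : (a (i + 1) + a (i - 1)) * (a (i + 1) + a (i - 1)) ∈ W := by
    rw [hqq, hgh]
    exact W.add_mem (W.add_mem (haW _) (haW _)) (W.add_mem (W.add_mem
      (W.smul_mem _ (W.sub_mem (haW _) (haW _))) (W.smul_mem _ (W.add_mem (W.smul_mem _ hsW)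
      (W.smul_mem _ (W.add_mem (haW _) (haW _)))))) (W.smul_mem _ (haW _)))
  have hiqq : a i * ((a (i + 1) + a (i - 1)) * (a (i + 1) + a (i - 1))) =
      a i * (a (i + 1) + a (i - 1)) + (β • (a i * a (i + 1) - a i * a (i - 3)) +
        g • ((2 : F) • (a i * s) + β • (a i + a i * a (i - 2))) + h • (a i * a (i - 1))) := by
    rw [hqq, hgh]
    simp only [mul_add, mul_sub, mul_smul_comm, (ha.axis i).idem]
  obtain ⟨c, d, d', hss⟩ :=
    (ha.axis i).axisDefect_mul_axisDefect hβ0 hβ1 (a (i + 1)) (a (i + 1))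
  rw [ha.miyamoto_apply, show 2 * i - (i + 1) = i - 1 by ring, ha.axisDefect_succ hβ0 hβ1, ← hs,
    hiqq] at hss
  have key : (4 : F) • (s * s) - β ^ 2 • axisDefect β (a i) (a (i - 3)) =
      β ^ 2 • ((a (i + 1) + a (i - 1)) * (a (i + 1) + a (i - 1))) + c • a i +
      (d + d' - β) • (a i * (a (i + 1) + a (i - 1))) - β ^ 2 • (a i * a (i + 1)) -
      (β * g) • ((2 : F) • (a i * s) + β • (a i + a i * a (i - 2))) -
      (β * h) • (a i * a (i - 1)) + β ^ 3 • (a i + a (i - 3)) := by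
    rw [axisDefect]
    linear_combination (norm := module) hss
  rw [key]
  refine W.add_mem (W.sub_mem (W.sub_mem (W.sub_mem (W.add_mem (W.add_mem (W.smul_mem _ hqqW)
    (W.smul_mem _ (haW _))) (W.smul_mem _ hq)) (W.smul_mem _ hsucc)) (W.smul_mem _ (W.add_mem
    (W.smul_mem _ his) (W.smul_mem _ (W.add_mem (haW _) hsub))))) (W.smul_mem _ hpred))
    (W.smul_mem _ (W.add_mem (haW _) (haW _)))

end LowDistance

/-- The span of the axes of a sequence together with the defect of two consecutive axes. -/
def lowSpan (β : F) (a : ℤ → A) : Submodule F A :=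
  Submodule.span F (Set.range a ∪ {axisDefect β (a 0) (a 1)})

/-- The span of the axes of a sequence together with the defect of two consecutive axes and
its square. -/
def fullSpan (β : F) (a : ℤ → A) : Submodule F A :=
  lowSpan β a ⊔ Submodule.span F {axisDefect β (a 0) (a 1) * axisDefect β (a 0) (a 1)}

theorem mem_lowSpan (β : F) (a : ℤ → A) (i : ℤ) : a i ∈ lowSpan β a :=
  Submodule.subset_span (Or.inl ⟨i, rfl⟩)

theorem defect_mem_lowSpan (β : F) (a : ℤ → A) : axisDefect β (a 0) (a 1) ∈ lowSpan β a :=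
  Submodule.subset_span (Or.inr rfl)

theorem lowSpan_le_fullSpan (β : F) (a : ℤ → A) : lowSpan β a ≤ fullSpan β a := le_sup_left

theorem mem_fullSpan (β : F) (a : ℤ → A) (i : ℤ) : a i ∈ fullSpan β a :=
  lowSpan_le_fullSpan β a (mem_lowSpan β a i)

theorem defect_sq_mem_fullSpan (β : F) (a : ℤ → A) :
    axisDefect β (a 0) (a 1) * axisDefect β (a 0) (a 1) ∈ fullSpan β a :=
  Submodule.mem_sup_right (Submodule.mem_span_singleton_self _)

theorem mul_mem_of_lowSpan {V : Submodule F A} {z : A} (hz : ∀ i, z * a i ∈ V)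
    (hzs : z * axisDefect β (a 0) (a 1) ∈ V) {x : A} (hx : x ∈ lowSpan β a) : z * x ∈ V := by
  have : lowSpan β a ≤ V.comap (LinearMap.mulLeft F z) := by
    refine Submodule.span_le.2 ?_
    rintro _ (⟨i, rfl⟩ | rfl)
    · exact hz i
    · exact hzs
  exact this hx

theorem mul_mem_of_fullSpan {V : Submodule F A} {z : A} (hz : ∀ x ∈ lowSpan β a, z * x ∈ V)
    (hzs : z * (axisDefect β (a 0) (a 1) * axisDefect β (a 0) (a 1)) ∈ V) {x : A}
    (hx : x ∈ fullSpan β a) : z * x ∈ V := by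
  have : fullSpan β a ≤ V.comap (LinearMap.mulLeft F z) :=
    sup_le hz (by simpa [Submodule.span_singleton_le_iff_mem] using hzs)
  exact this hx

theorem axisDefect_mem_fullSpan (ha : AxisSequence β a) (hβ0 : β ≠ 0) (hβ1 : β ≠ 1)
    (h2 : (2 : F) ≠ 0) (i : ℤ) : axisDefect β (a i) (a (i - 3)) ∈ fullSpan β a := by
  have h := lowSpan_le_fullSpan β a
    (ha.defect_sq_sub_mem hβ0 hβ1 h2 (mem_lowSpan β a) (defect_mem_lowSpan β a) i)
  have hs := (fullSpan β a).smul_mem (4 : F) (defect_sq_mem_fullSpan β a)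
  exact ((fullSpan β a).smul_mem_iff (pow_ne_zero 2 hβ0)).1
    (((fullSpan β a).sub_mem_iff_right hs).1 h)

theorem axis_mul_axis_mem (ha : AxisSequence β a) (hβ0 : β ≠ 0) (hβ1 : β ≠ 1)
    (h2 : (2 : F) ≠ 0) (i j : ℤ) : a i * a j ∈ fullSpan β a := by
  have hW := lowSpan_le_fullSpan β a
  have haW := mem_lowSpan β a
  have hsW := defect_mem_lowSpan β a
  have haV := mem_fullSpan β a
  have main : ∀ (n : ℕ) (i : ℤ), a i * a (i + n) ∈ fullSpan β a := by
    intro n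
    induction n using Nat.strong_induction_on with
    | _ n ih =>
      intro i
      match n, ih with
      | 0, _ => simpa [(ha.axis i).idem] using haV i
      | 1, _ => exact hW (ha.mul_succ_mem hβ0 hβ1 haW hsW i)
      | 2, _ => exact hW (ha.mul_add_two_mem hβ0 hβ1 h2 haW hsW i)
      | 3, _ =>
        have h := ha.axisDefect_mem_fullSpan hβ0 hβ1 h2 (i + 3)
        rw [axisDefect, add_sub_cancel_right, mul_comm] at h
        exact ((fullSpan β a).sub_mem_iff_left
          ((fullSpan β a).smul_mem _ ((fullSpan β a).add_mem (haV _) (haV _)))).1 h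
      | n + 4, ih =>
        have near : ∀ k : ℤ, -2 ≤ k → k < n + 4 → a i * a (i + k) ∈ fullSpan β a := by
          intro k hk hkn
          obtain ⟨m, rfl | rfl⟩ := k.eq_nat_or_neg
          · exact ih m (by omega) i
          · have := ih m (by omega) (i + -m)
            rwa [neg_add_cancel_right, mul_comm] at this
        obtain ⟨c, d, h⟩ := ha.six_step hβ0 hβ1 h2 (i + (n - 2))
        have e : i + ((n + 4 : ℕ) : ℤ) = i + (n - 2) + 6 := by push_cast; ring
        rw [e, h]
        simp only [mul_add, mul_sub, mul_smul_comm, add_assoc i]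
        refine Submodule.add_mem _ (Submodule.add_mem _ ?_ (Submodule.smul_mem _ _
          (Submodule.sub_mem _ ?_ ?_))) (Submodule.smul_mem _ _ (Submodule.sub_mem _ ?_ ?_)) <;>
        exact near _ (by omega) (by omega)
  rcases le_total i j with h | h
  · obtain ⟨n, hn⟩ := Int.le.dest h
    exact hn ▸ main n i
  · obtain ⟨n, hn⟩ := Int.le.dest h
    rw [mul_comm]
    exact hn ▸ main n j

theorem axis_mul_mem (ha : AxisSequence β a) (hβ0 : β ≠ 0) (hβ1 : β ≠ 1)
    (h2 : (2 : F) ≠ 0) (i : ℤ) {x : A} (hx : x ∈ fullSpan β a) : a i * x ∈ fullSpan β a := by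
  have h4 : (4 : F) ≠ 0 := by
    rw [show (4 : F) = 2 * 2 by norm_num]; exact mul_ne_zero h2 h2
  have haV := mem_fullSpan β a
  have hlow : ∀ x ∈ lowSpan β a, a i * x ∈ fullSpan β a := fun x hx =>
    mul_mem_of_lowSpan (ha.axis_mul_axis_mem hβ0 hβ1 h2 i) (lowSpan_le_fullSpan β a
      (ha.mul_defect_mem hβ0 hβ1 h2 (mem_lowSpan β a) (defect_mem_lowSpan β a) i)) hx
  refine mul_mem_of_fullSpan hlow ?_ hx
  have h := hlow _
    (ha.defect_sq_sub_mem hβ0 hβ1 h2 (mem_lowSpan β a) (defect_mem_lowSpan β a) i)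
  obtain ⟨c, hc⟩ := ha.mul_axisDefect hβ0 hβ1 h2 i (-3)
  have hr := ha.axisDefect_mem_fullSpan hβ0 hβ1 h2 i
  have hir : a i * axisDefect β (a i) (a (i - 3)) ∈ fullSpan β a := by
    rw [sub_eq_add_neg] at hr ⊢
    rw [hc]
    exact Submodule.add_mem _ (Submodule.add_mem _ (Submodule.smul_mem _ _ hr)
      (Submodule.smul_mem _ _ (Submodule.add_mem _ (haV _) (haV _)))) (Submodule.smul_mem _ _ (haV _))
  rw [mul_sub, mul_smul_comm, mul_smul_comm,
    Submodule.sub_mem_iff_left _ (Submodule.smul_mem _ _ hir)] at h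
  exact (Submodule.smul_mem_iff _ h4).1 h

theorem axisDefect_mul_axisDefect_mem (ha : AxisSequence β a) (hβ0 : β ≠ 0) (hβ1 : β ≠ 1)
    (h2 : (2 : F) ≠ 0) (i j k : ℤ) :
    axisDefect β (a i) (a j) * axisDefect β (a i) (a k) ∈ fullSpan β a := by
  have h4 : (4 : F) ≠ 0 := by
    rw [show (4 : F) = 2 * 2 by norm_num]; exact mul_ne_zero h2 h2
  have haV := mem_fullSpan β a
  have hq : ∀ j, a j + a (2 * i - j) ∈ fullSpan β a := fun j =>
    Submodule.add_mem _ (haV _) (haV _)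
  have hqq : (a j + a (2 * i - j)) * (a k + a (2 * i - k)) ∈ fullSpan β a := by
    rw [add_mul]
    exact Submodule.add_mem _ (ha.axis_mul_mem hβ0 hβ1 h2 _ (hq k))
      (ha.axis_mul_mem hβ0 hβ1 h2 _ (hq k))
  obtain ⟨c, d, d', h⟩ := (ha.axis i).axisDefect_mul_axisDefect hβ0 hβ1 (a j) (a k)
  rw [ha.miyamoto_apply, ha.miyamoto_apply, ← eq_sub_iff_add_eq] at h
  refine (Submodule.smul_mem_iff _ h4).1 ?_
  rw [h]
  exact Submodule.sub_mem _ (Submodule.add_mem _ (Submodule.add_mem _ (Submodule.add_mem _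
    (Submodule.smul_mem _ _ hqq) (Submodule.smul_mem _ _ (haV _)))
    (Submodule.smul_mem _ _ (ha.axis_mul_mem hβ0 hβ1 h2 _ (hq j))))
    (Submodule.smul_mem _ _ (ha.axis_mul_mem hβ0 hβ1 h2 _ (hq k))))
    (Submodule.smul_mem _ _ (ha.axis_mul_mem hβ0 hβ1 h2 _ hqq))

theorem mul_mem_fullSpan (ha : AxisSequence β a) (hβ0 : β ≠ 0) (hβ1 : β ≠ 1)
    (h2 : (2 : F) ≠ 0) {x y : A} (hx : x ∈ fullSpan β a) (hy : y ∈ fullSpan β a) :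
    x * y ∈ fullSpan β a := by
  have h4 : (4 : F) ≠ 0 := by
    rw [show (4 : F) = 2 * 2 by norm_num]; exact mul_ne_zero h2 h2
  have hlow := ha.defect_sq_sub_mem hβ0 hβ1 h2 (mem_lowSpan β a) (defect_mem_lowSpan β a) 0
  have hsr := ha.axisDefect_mul_axisDefect_mem hβ0 hβ1 h2 0 1 (0 - 3)
  have hrr := ha.axisDefect_mul_axisDefect_mem hβ0 hβ1 h2 0 (0 - 3) (0 - 3)
  have hr := ha.axisDefect_mem_fullSpan hβ0 hβ1 h2 0
  have hss := defect_sq_mem_fullSpan β a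
  have haxis : ∀ x ∈ fullSpan β a, ∀ i, x * a i ∈ fullSpan β a := fun x hx i => by
    rw [mul_comm]; exact ha.axis_mul_mem hβ0 hβ1 h2 i hx
  set s := axisDefect β (a 0) (a 1)
  set r := axisDefect β (a 0) (a (0 - 3))
  have hsV : s ∈ fullSpan β a := lowSpan_le_fullSpan β a (defect_mem_lowSpan β a)
  have reduce : ∀ z, (∀ x ∈ lowSpan β a, z * x ∈ fullSpan β a) → z * r ∈ fullSpan β a →
      z * (s * s) ∈ fullSpan β a := fun z hz hzr => by
    have h := hz _ hlow
    rw [mul_sub, mul_smul_comm, mul_smul_comm,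
      Submodule.sub_mem_iff_left _ (Submodule.smul_mem _ _ hzr)] at h
    exact (Submodule.smul_mem_iff _ h4).1 h
  have hslow : ∀ x ∈ lowSpan β a, s * x ∈ fullSpan β a := fun x hx =>
    mul_mem_of_lowSpan (haxis s hsV) hss hx
  have hsfull : ∀ x ∈ fullSpan β a, x * s ∈ fullSpan β a := fun x hx => by
    rw [mul_comm]; exact mul_mem_of_fullSpan hslow (reduce s hslow hsr) hx
  have hfull : ∀ z ∈ fullSpan β a, ∀ x ∈ lowSpan β a, z * x ∈ fullSpan β a := fun z hz x hx =>
    mul_mem_of_lowSpan (haxis z hz) (hsfull z hz) hx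
  have hrss : r * (s * s) ∈ fullSpan β a := reduce r (hfull r hr) hrr
  have hssr : s * s * r ∈ fullSpan β a := by rwa [mul_comm]
  have hssss : s * s * (s * s) ∈ fullSpan β a := reduce (s * s) (hfull _ hss) hssr
  refine mul_mem_of_fullSpan (hfull x hx) ?_ hy
  rw [mul_comm]
  exact mul_mem_of_fullSpan (hfull _ hss) hssss hx

theorem rank_fullSpan_le (ha : AxisSequence β a) (hβ0 : β ≠ 0) (hβ1 : β ≠ 1)
    (h2 : (2 : F) ≠ 0) : Module.rank F (fullSpan β a) ≤ 8 := by
  set s := axisDefect β (a 0) (a 1) with hs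
  let b : Fin 8 → A := ![a 0, a 1, a 2, a 3, a 4, a 5, s, s * s]
  have hb : ∀ k, b k ∈ Submodule.span F (Set.range b) := fun k => Submodule.subset_span ⟨k, rfl⟩
  have hle : fullSpan β a ≤ Submodule.span F (Set.range b) := by
    refine sup_le (Submodule.span_le.2 ?_) ?_
    · rintro _ (⟨i, rfl⟩ | rfl)
      · exact ha.mem_of_consecutive hβ0 hβ1 h2 ⟨hb 0, hb 1, hb 2, hb 3, hb 4, hb 5⟩ i
      · exact hb 6
    · rw [Submodule.span_singleton_le_iff_mem]
      exact hb 7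
  calc Module.rank F (fullSpan β a)
      ≤ Module.rank F (Submodule.span F (Set.range b)) := Submodule.rank_mono hle
    _ ≤ Cardinal.mk (Set.range b) := rank_span_le _
    _ ≤ 8 := by simpa using Cardinal.mk_range_le_lift (f := b)

end AxisSequence

end

theorem dimension_bound_two_beta
    (hchar : ringChar F ≠ 2) (β : F)
    (hβ0 : β ≠ 0) (hβ1 : β ≠ 1) (h2β0 : 2 * β ≠ 0) (h2β1 : 2 * β ≠ 1) (h2ββ : 2 * β ≠ β)
    (hgen : IsTwoGeneratedMonsterType F A (2 * β) β) :
    Module.rank F A ≤ 8 := by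
  have h2 : (2 : F) ≠ 0 := left_ne_zero_of_mul h2β0
  obtain ⟨e, f, he, hf, hef⟩ := hgen
  obtain ⟨a, ha, rfl, rfl⟩ := exists_axisSequence hβ0 hβ1 he.fusionAxis hf.fusionAxis
  have htop : AxisSequence.fullSpan β a = ⊤ := by
    refine eq_top_iff.2 fun x _ => ?_
    have hx : x ∈ NonUnitalAlgebra.adjoin F ({a 0, a 1} : Set A) := hef ▸ NonUnitalAlgebra.mem_top
    induction hx using NonUnitalAlgebra.adjoin_induction with
    | mem x hx =>
      rcases hx with rfl | rfl
      · exact AxisSequence.mem_fullSpan β a 0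
      · exact AxisSequence.mem_fullSpan β a 1
    | add x y _ _ hx hy => exact Submodule.add_mem _ (hx trivial) (hy trivial)
    | zero => exact Submodule.zero_mem _
    | mul x y _ _ hx hy => exact ha.mul_mem_fullSpan hβ0 hβ1 h2 (hx trivial) (hy trivial)
    | smul c x _ hx => exact Submodule.smul_mem _ c (hx trivial)
  rw [← rank_top F A, ← htop]
  exact ha.rank_fullSpan_le hβ0 hβ1 h2
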